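/- Let V be a finite-dimensional real vector space, J : V → V a linear map with J ∘ J = −id, T a symmetric trilinear form on V, and λ any real number. If D_J T = λ·T, then T = 0. In particular (case λ = 0), the only symmetric trilinear form T on V satisfying T(Jx,y,z) + T(x,Jy,z) + T(x,y,Jz) = 0 for all x,y,z is T = 0. -/

import Mathlib

/-!
The derivation `D = D_J` is a sum of three commuting operators with square `-1`, so its complex
eigenvalues are `±i, ±3i` and `(D² + 1)(D² + 9) = 0`. Hence `D T = λ T` with `λ` real gives
`(λ² + 1)(λ² + 9) T = 0`, and so `T = 0`.

The computation is done by hand for fixed `x, y, z`: let `Sₖ` be the sum of the values of `T` at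
the triples obtained from `(x, y, z)` by applying `J` to exactly `k` entries. The eigenvalue equation
gives `S₁ = λ S₀`, `2 S₂ - 3 S₀ = λ S₁`, `3 S₃ - 2 S₁ = λ S₂` and `-S₂ = λ S₃`; eliminating
`S₁, S₂, S₃` leaves `((λ² + 3)² + 4 λ²) S₀ = 0`.
-/

/-- The derivation action of a linear map `J` on trilinear forms (realized as
multilinear maps on three copies of `V`):
`(D_J T)(x,y,z) = T(Jx,y,z) + T(x,Jy,z) + T(x,y,Jz)`. -/
noncomputable def derTrilin {V : Type*} [AddCommGroup V] [Module ℝ V]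
    (J : V →ₗ[ℝ] V) (T : MultilinearMap ℝ (fun _ : Fin 3 => V) ℝ) :
    MultilinearMap ℝ (fun _ : Fin 3 => V) ℝ :=
  ∑ i : Fin 3, T.compLinearMap (Function.update (fun _ : Fin 3 => (LinearMap.id : V →ₗ[ℝ] V)) i J)

theorem derTrilin_apply {V : Type*} [AddCommGroup V] [Module ℝ V]
    (J : V →ₗ[ℝ] V) (T : MultilinearMap ℝ (fun _ : Fin 3 => V) ℝ) (x y z : V) :
    derTrilin J T ![x, y, z] = T ![J x, y, z] + T ![x, J y, z] + T ![x, y, J z] := by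
  simp only [derTrilin, Fin.sum_univ_three, add_apply,
    MultilinearMap.compLinearMap_apply]
  congr 1
  · congr 1 <;> congr 1 <;> ext i <;> fin_cases i <;> simp
  · congr 1; ext i; fin_cases i <;> simp

/-- If `J ∘ J = -id` on a finite-dimensional real vector space `V`,
`T` is a symmetric trilinear form, `λ` is any real number and `D_J T = λ • T`,
then `T = 0`.  In particular (`λ = 0`), the only symmetric trilinear form with
`T(Jx,y,z) + T(x,Jy,z) + T(x,y,Jz) = 0` for all `x,y,z` is `T = 0`. -/
theorem derTrilin_no_real_eigenvalue
    (V : Type*) [AddCommGroup V] [Module ℝ V] [FiniteDimensional ℝ V]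
    (J : V →ₗ[ℝ] V) (hJ : J ∘ₗ J = -LinearMap.id)
    (T : MultilinearMap ℝ (fun _ : Fin 3 => V) ℝ)
    (hT : ∀ (σ : Equiv.Perm (Fin 3)) (v : Fin 3 → V), T (v ∘ σ) = T v)
    (lam : ℝ) (heig : derTrilin J T = lam • T) :
    T = 0 := by
  have hJJ : ∀ v, J (J v) = -v := fun v => by
    simpa using LinearMap.congr_fun hJ v
  have key : ∀ x y z : V,
      T ![J x, y, z] + T ![x, J y, z] + T ![x, y, J z] = lam * T ![x, y, z] := fun x y z => by
    rw [← derTrilin_apply, heig, smul_apply, smul_eq_mul]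
  have neg0 : ∀ x y z : V, T ![-x, y, z] = -T ![x, y, z] := fun x y z => by
    have h := T.map_update_neg ![x, y, z] 0 x
    rwa [show Function.update ![x, y, z] 0 (-x) = ![-x, y, z] from
        funext fun i => by fin_cases i <;> rfl,
      show Function.update ![x, y, z] 0 x = ![x, y, z] from
        funext fun i => by fin_cases i <;> rfl] at h
  have neg1 : ∀ x y z : V, T ![x, -y, z] = -T ![x, y, z] := fun x y z => by
    have h := T.map_update_neg ![x, y, z] 1 y
    rwa [show Function.update ![x, y, z] 1 (-y) = ![x, -y, z] from
        funext fun i => by fin_cases i <;> rfl,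
      show Function.update ![x, y, z] 1 y = ![x, y, z] from
        funext fun i => by fin_cases i <;> rfl] at h
  have neg2 : ∀ x y z : V, T ![x, y, -z] = -T ![x, y, z] := fun x y z => by
    have h := T.map_update_neg ![x, y, z] 2 z
    rwa [show Function.update ![x, y, z] 2 (-z) = ![x, y, -z] from
        funext fun i => by fin_cases i <;> rfl,
      show Function.update ![x, y, z] 2 z = ![x, y, z] from
        funext fun i => by fin_cases i <;> rfl] at h
  ext v
  obtain ⟨x, y, z, rfl⟩ : ∃ x y z, v = ![x, y, z] :=
    ⟨v 0, v 1, v 2, by ext i; fin_cases i <;> rfl⟩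
  have h000 := key x y z
  have h100 := key (J x) y z
  have h010 := key x (J y) z
  have h001 := key x y (J z)
  have h110 := key (J x) (J y) z
  have h101 := key (J x) y (J z)
  have h011 := key x (J y) (J z)
  have h111 := key (J x) (J y) (J z)
  simp only [hJJ, neg0, neg1, neg2] at h100 h010 h001 h110 h101 h011 h111
  have hprod : ((lam ^ 2 + 3) ^ 2 + 4 * lam ^ 2) * T ![x, y, z] = 0 := by
    -- The coefficients carry out the elimination of `S₁, S₂, S₃`.
    linear_combination (-(lam ^ 3 + 7 * lam)) * h000 - (lam ^ 2 + 3) * (h100 + h010 + h001)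
      - 2 * lam * (h110 + h101 + h011) - 6 * h111
  have hpos : (lam ^ 2 + 3) ^ 2 + 4 * lam ^ 2 ≠ 0 := by positivity
  simpa using (mul_eq_zero.mp hprod).resolve_left hpos
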